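/- Let the notation be as in the context, with two splicing data (superscripts 1 and 2) and the splicing map D. Suppose that in the second datum: B0^2 is injective, Binf^2 is surjective, rank(B1^2) = a1^2, a0^2 = a1^2 + 1, a1^2 < ainf^2, and the composite Binf^2 B1^2 is surjective. Then dim coker(D) ≥ dim coker(X1^1 Binf^1) · dim coker(X1^2). If moreover the composite B1^2 B0^2 is injective, then dim ker(D) ≥ dim ker(B0^1 X1^1) · dim ker(X1^2). -/

import Mathlib

set_option maxHeartbeats 1600000

open Matrix Module
open scoped Kronecker

abbrev F2 : Type := ZMod 2

/-- A splicing datum: the algebraic data extracted from the knot Floer homology of a knot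
in a homology sphere, as in Eftekhary's splicing formula. -/
structure SplicingDatum where
  a0 : ℕ
  a1 : ℕ
  ainf : ℕ
  A0 : Matrix (Fin ainf) (Fin ainf) F2
  B0 : Matrix (Fin ainf) (Fin a1) F2
  C0 : Matrix (Fin a1) (Fin ainf) F2
  D0 : Matrix (Fin a1) (Fin a1) F2
  A1 : Matrix (Fin a0) (Fin a0) F2
  B1 : Matrix (Fin a0) (Fin ainf) F2
  C1 : Matrix (Fin ainf) (Fin a0) F2
  D1 : Matrix (Fin ainf) (Fin ainf) F2
  Ainf : Matrix (Fin a1) (Fin a1) F2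
  Binf : Matrix (Fin a1) (Fin a0) F2
  Cinf : Matrix (Fin a0) (Fin a1) F2
  Dinf : Matrix (Fin a0) (Fin a0) F2
  C0inv : Matrix (Fin a1) (Fin ainf) F2
  C1inv : Matrix (Fin ainf) (Fin a0) F2
  Cinfinv : Matrix (Fin a0) (Fin a1) F2
  inv0_left : Matrix.fromBlocks A0 B0 C0 D0 * Matrix.fromBlocks A0 B0 C0inv D0 = 1
  inv0_right : Matrix.fromBlocks A0 B0 C0inv D0 * Matrix.fromBlocks A0 B0 C0 D0 = 1
  inv1_left : Matrix.fromBlocks A1 B1 C1 D1 * Matrix.fromBlocks A1 B1 C1inv D1 = 1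
  inv1_right : Matrix.fromBlocks A1 B1 C1inv D1 * Matrix.fromBlocks A1 B1 C1 D1 = 1
  invinf_left : Matrix.fromBlocks Ainf Binf Cinf Dinf * Matrix.fromBlocks Ainf Binf Cinfinv Dinf = 1
  invinf_right : Matrix.fromBlocks Ainf Binf Cinfinv Dinf * Matrix.fromBlocks Ainf Binf Cinf Dinf = 1
  comm0 : A0 * B0 + B0 * D0 = 0
  comm1 : A1 * B1 + B1 * D1 = 0
  comminf : Ainf * Binf + Binf * Dinf = 0
  sq0 : B1 * B0 * Binf * (B1 * B0 * Binf) = 0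
  sq1 : Binf * B1 * B0 * (Binf * B1 * B0) = 0
  sqinf : B0 * Binf * B1 * (B0 * Binf * B1) = 0

/-- dimension of the kernel of the linear map induced by a matrix -/
noncomputable def kdim {m n : Type*} [Fintype n] (M : Matrix m n F2) : ℕ :=
  finrank F2 ↥(LinearMap.ker M.mulVecLin)

/-- dimension of the cokernel of the linear map induced by a matrix -/
noncomputable def cdim {m n : Type*} [Fintype n] (M : Matrix m n F2) : ℕ :=
  finrank F2 ((m → F2) ⧸ LinearMap.range M.mulVecLin)

/-- tensor product of two vectors, as a vector indexed by the product type -/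
def tensVec {m n : Type*} (x : m → F2) (y : n → F2) : m × n → F2 :=
  fun p => x p.1 * y p.2

namespace SplicingDatum

variable (d : SplicingDatum)

def X0M : Matrix (Fin d.a0) (Fin d.a0) F2 := d.B1 * d.B0 * d.Binf
def X1M : Matrix (Fin d.a1) (Fin d.a1) F2 := d.Binf * d.B1 * d.B0
def XinfM : Matrix (Fin d.ainf) (Fin d.ainf) F2 := d.B0 * d.Binf * d.B1

def tau0 : Matrix (Fin d.ainf ⊕ Fin d.a1) (Fin d.ainf ⊕ Fin d.a1) F2 :=
  Matrix.fromBlocks d.A0 d.B0 d.C0 d.D0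
def tau0inv : Matrix (Fin d.ainf ⊕ Fin d.a1) (Fin d.ainf ⊕ Fin d.a1) F2 :=
  Matrix.fromBlocks d.A0 d.B0 d.C0inv d.D0
def tau1 : Matrix (Fin d.a0 ⊕ Fin d.ainf) (Fin d.a0 ⊕ Fin d.ainf) F2 :=
  Matrix.fromBlocks d.A1 d.B1 d.C1 d.D1
def tau1inv : Matrix (Fin d.a0 ⊕ Fin d.ainf) (Fin d.a0 ⊕ Fin d.ainf) F2 :=
  Matrix.fromBlocks d.A1 d.B1 d.C1inv d.D1
def tauinf : Matrix (Fin d.a1 ⊕ Fin d.a0) (Fin d.a1 ⊕ Fin d.a0) F2 :=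
  Matrix.fromBlocks d.Ainf d.Binf d.Cinf d.Dinf
def tauinfinv : Matrix (Fin d.a1 ⊕ Fin d.a0) (Fin d.a1 ⊕ Fin d.a0) F2 :=
  Matrix.fromBlocks d.Ainf d.Binf d.Cinfinv d.Dinf

/-- the map `finf : F^{ainf+a1} → F^{a0+ainf}` -/
def finfM : Matrix (Fin d.a0 ⊕ Fin d.ainf) (Fin d.ainf ⊕ Fin d.a1) F2 :=
  Matrix.fromBlocks 0 0 (1 : Matrix (Fin d.ainf) (Fin d.ainf) F2) 0
/-- the map `f0 : F^{a0+ainf} → F^{a1+a0}` -/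
def f0M : Matrix (Fin d.a1 ⊕ Fin d.a0) (Fin d.a0 ⊕ Fin d.ainf) F2 :=
  Matrix.fromBlocks 0 0 (1 : Matrix (Fin d.a0) (Fin d.a0) F2) 0
/-- the map `f1 : F^{a1+a0} → F^{ainf+a1}` -/
def f1M : Matrix (Fin d.ainf ⊕ Fin d.a1) (Fin d.a1 ⊕ Fin d.a0) F2 :=
  Matrix.fromBlocks 0 0 (1 : Matrix (Fin d.a1) (Fin d.a1) F2) 0

def fbarinfM : Matrix (Fin d.a0 ⊕ Fin d.ainf) (Fin d.ainf ⊕ Fin d.a1) F2 :=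
  d.tau1inv * d.finfM * d.tau0
def fbar0M : Matrix (Fin d.a1 ⊕ Fin d.a0) (Fin d.a0 ⊕ Fin d.ainf) F2 :=
  d.tauinfinv * d.f0M * d.tau1
def fbar1M : Matrix (Fin d.ainf ⊕ Fin d.a1) (Fin d.a1 ⊕ Fin d.a0) F2 :=
  d.tau0inv * d.f1M * d.tauinf

noncomputable def r0 : ℕ := d.B0.rank
noncomputable def r1 : ℕ := d.B1.rank
noncomputable def rinf : ℕ := d.Binf.rank

noncomputable def k0 : ℕ :=
  finrank F2 ↥(LinearMap.ker d.f0M.mulVecLin ⊓ LinearMap.ker d.fbar0M.mulVecLin)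
noncomputable def k1 : ℕ :=
  finrank F2 ↥(LinearMap.ker d.f1M.mulVecLin ⊓ LinearMap.ker d.fbar1M.mulVecLin)
noncomputable def kinf : ℕ :=
  finrank F2 ↥(LinearMap.ker d.finfM.mulVecLin ⊓ LinearMap.ker d.fbarinfM.mulVecLin)

noncomputable def l0 : ℕ :=
  finrank F2 ↥(LinearMap.ker (d.f0M + d.fbar0M).mulVecLin) - d.k0
noncomputable def l1 : ℕ :=
  finrank F2 ↥(LinearMap.ker (d.f1M + d.fbar1M).mulVecLin) - d.k1
noncomputable def linf : ℕ :=
  finrank F2 ↥(LinearMap.ker (d.finfM + d.fbarinfM).mulVecLin) - d.kinf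

noncomputable def c0 : ℕ :=
  finrank F2 ((Fin d.a1 ⊕ Fin d.a0 → F2) ⧸
    (LinearMap.range d.f0M.mulVecLin ⊔ LinearMap.range d.fbar0M.mulVecLin))
noncomputable def c1 : ℕ :=
  finrank F2 ((Fin d.ainf ⊕ Fin d.a1 → F2) ⧸
    (LinearMap.range d.f1M.mulVecLin ⊔ LinearMap.range d.fbar1M.mulVecLin))
noncomputable def cinf : ℕ :=
  finrank F2 ((Fin d.a0 ⊕ Fin d.ainf → F2) ⧸
    (LinearMap.range d.finfM.mulVecLin ⊔ LinearMap.range d.fbarinfM.mulVecLin))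

noncomputable def dd0 : ℕ :=
  finrank F2 ↥(LinearMap.range d.f0M.mulVecLin ⊔ LinearMap.range d.fbar0M.mulVecLin) -
    finrank F2 ↥(LinearMap.range (d.f0M + d.fbar0M).mulVecLin)
noncomputable def dd1 : ℕ :=
  finrank F2 ↥(LinearMap.range d.f1M.mulVecLin ⊔ LinearMap.range d.fbar1M.mulVecLin) -
    finrank F2 ↥(LinearMap.range (d.f1M + d.fbar1M).mulVecLin)
noncomputable def ddinf : ℕ :=
  finrank F2 ↥(LinearMap.range d.finfM.mulVecLin ⊔ LinearMap.range d.fbarinfM.mulVecLin) -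
    finrank F2 ↥(LinearMap.range (d.finfM + d.fbarinfM).mulVecLin)

noncomputable def delta0 : ℕ := d.a0 - d.rinf - d.l0
noncomputable def delta1 : ℕ := d.a1 - d.r0 - d.l1
noncomputable def deltainf : ℕ := d.ainf - d.r1 - d.linf

end SplicingDatum

namespace SplicingDatum

/-- Index type of the source of the splicing map `D`. -/
abbrev Src (e1 e2 : SplicingDatum) : Type :=
  (Fin e1.ainf × Fin e2.ainf) ⊕ (Fin e1.ainf × Fin e2.a0) ⊕ (Fin e1.a1 × Fin e2.a0) ⊕
    (Fin e1.a0 × Fin e2.ainf) ⊕ (Fin e1.a0 × Fin e2.a1) ⊕ (Fin e1.a1 × Fin e2.a1)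

/-- Index type of the target of the splicing map `D`. -/
abbrev Tgt (e1 e2 : SplicingDatum) : Type :=
  (Fin e1.a0 × Fin e2.a0) ⊕ (Fin e1.ainf × Fin e2.a1) ⊕ (Fin e1.ainf × Fin e2.a0) ⊕
    (Fin e1.a1 × Fin e2.ainf) ⊕ (Fin e1.a0 × Fin e2.ainf) ⊕ (Fin e1.a1 × Fin e2.a1)

def row1 (e1 e2 : SplicingDatum) : Matrix (Fin e1.a0 × Fin e2.a0) (Src e1 e2) F2 :=
  Matrix.fromCols ((e1.Dinf * e1.B1) ⊗ₖ (e2.B1 * e2.A0)) <|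
  Matrix.fromCols ((e1.B1 * e1.A0) ⊗ₖ (1 : Matrix (Fin e2.a0) (Fin e2.a0) F2)) <|
  Matrix.fromCols ((e1.B1 * e1.B0) ⊗ₖ (1 : Matrix (Fin e2.a0) (Fin e2.a0) F2)) <|
  Matrix.fromCols ((e1.Dinf * e1.A1) ⊗ₖ (e2.B1 * e2.A0)) <|
  Matrix.fromCols ((1 : Matrix (Fin e1.a0) (Fin e1.a0) F2) ⊗ₖ (e2.B1 * e2.B0)) 0

def row2 (e1 e2 : SplicingDatum) : Matrix (Fin e1.ainf × Fin e2.a1) (Src e1 e2) F2 :=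
  Matrix.fromCols ((1 : Matrix (Fin e1.ainf) (Fin e1.ainf) F2) ⊗ₖ (e2.Binf * e2.B1)) <|
  Matrix.fromCols ((e1.D1 * e1.A0) ⊗ₖ (e2.Binf * e2.A1)) <|
  Matrix.fromCols ((e1.D1 * e1.B0) ⊗ₖ (e2.Binf * e2.A1)) <|
  Matrix.fromCols 0 <|
  Matrix.fromCols ((e1.B0 * e1.Binf) ⊗ₖ (1 : Matrix (Fin e2.a1) (Fin e2.a1) F2))
    ((e1.B0 * e1.Ainf) ⊗ₖ (1 : Matrix (Fin e2.a1) (Fin e2.a1) F2))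

def row3 (e1 e2 : SplicingDatum) : Matrix (Fin e1.ainf × Fin e2.a0) (Src e1 e2) F2 :=
  Matrix.fromCols ((1 : Matrix (Fin e1.ainf) (Fin e1.ainf) F2) ⊗ₖ (e2.Dinf * e2.B1)) <|
  Matrix.fromCols
    ((1 : Matrix (Fin e1.ainf) (Fin e1.ainf) F2) ⊗ₖ (1 : Matrix (Fin e2.a0) (Fin e2.a0) F2) +
      (e1.D1 * e1.A0) ⊗ₖ (e2.Dinf * e2.A1)) <|
  Matrix.fromCols ((e1.D1 * e1.B0) ⊗ₖ (e2.Dinf * e2.A1)) <|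
  Matrix.fromCols 0 <|
  Matrix.fromCols 0 0

def row4 (e1 e2 : SplicingDatum) : Matrix (Fin e1.a1 × Fin e2.ainf) (Src e1 e2) F2 :=
  Matrix.fromCols ((e1.Binf * e1.B1) ⊗ₖ (1 : Matrix (Fin e2.ainf) (Fin e2.ainf) F2)) <|
  Matrix.fromCols 0 <|
  Matrix.fromCols ((1 : Matrix (Fin e1.a1) (Fin e1.a1) F2) ⊗ₖ (e2.B0 * e2.Binf)) <|
  Matrix.fromCols ((e1.Binf * e1.A1) ⊗ₖ (1 : Matrix (Fin e2.ainf) (Fin e2.ainf) F2)) <|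
  Matrix.fromCols
    ((e1.D0 * e1.Binf) ⊗ₖ (e2.B0 * e2.Ainf) + (e1.X1M * e1.Binf) ⊗ₖ (e2.B0 * e2.X1M))
    ((e1.D0 * e1.Ainf) ⊗ₖ (e2.B0 * e2.Ainf) + (e1.X1M * e1.Ainf) ⊗ₖ (e2.B0 * e2.X1M))

def row5 (e1 e2 : SplicingDatum) : Matrix (Fin e1.a0 × Fin e2.ainf) (Src e1 e2) F2 :=
  Matrix.fromCols ((e1.Dinf * e1.B1) ⊗ₖ (e2.D1 * e2.A0)) <|
  Matrix.fromCols 0 <|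
  Matrix.fromCols 0 <|
  Matrix.fromCols
    ((1 : Matrix (Fin e1.a0) (Fin e1.a0) F2) ⊗ₖ (1 : Matrix (Fin e2.ainf) (Fin e2.ainf) F2) +
      (e1.Dinf * e1.A1) ⊗ₖ (e2.D1 * e2.A0)) <|
  Matrix.fromCols ((1 : Matrix (Fin e1.a0) (Fin e1.a0) F2) ⊗ₖ (e2.D1 * e2.B0)) 0

def row6 (e1 e2 : SplicingDatum) : Matrix (Fin e1.a1 × Fin e2.a1) (Src e1 e2) F2 :=
  Matrix.fromCols 0 <|
  Matrix.fromCols 0 <|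
  Matrix.fromCols ((1 : Matrix (Fin e1.a1) (Fin e1.a1) F2) ⊗ₖ (e2.D0 * e2.Binf)) <|
  Matrix.fromCols 0 <|
  Matrix.fromCols
    ((e1.D0 * e1.Binf) ⊗ₖ (e2.D0 * e2.Ainf) + (e1.X1M * e1.Binf) ⊗ₖ (e2.D0 * e2.X1M))
    ((1 : Matrix (Fin e1.a1) (Fin e1.a1) F2) ⊗ₖ (1 : Matrix (Fin e2.a1) (Fin e2.a1) F2) +
      (e1.D0 * e1.Ainf) ⊗ₖ (e2.D0 * e2.Ainf) + (e1.X1M * e1.Ainf) ⊗ₖ (e2.D0 * e2.X1M))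

/-- The splicing map `D = D(K1, K2)` as a `6 × 6` block matrix. -/
def spliceD (e1 e2 : SplicingDatum) : Matrix (Tgt e1 e2) (Src e1 e2) F2 :=
  Matrix.fromRows (row1 e1 e2) <| Matrix.fromRows (row2 e1 e2) <|
  Matrix.fromRows (row3 e1 e2) <| Matrix.fromRows (row4 e1 e2) <|
  Matrix.fromRows (row5 e1 e2) (row6 e1 e2)

end SplicingDatum

/-!
If `E * D = 0` and `E` has a right inverse, then the rows of `E` are independent functionals on
`coker D`. Such an `E` is assembled from tensor products `P S ⊗ Q T`, where the rows of `P` and `Q`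
are bases of the functionals on `coker (X1¹ Binf¹)` and `coker X1²` and `S`, `T` are words in the
blocks of the two data: modulo the relations `A0 B0 = B0 D0` and `Ainf Binf = Binf Dinf`, the terms
of each block of `E * D` that are not killed by `P` or `Q` occur in pairs, so they cancel in
characteristic two. A right inverse of `E` is built in the same way; it works because of the
relations `A0 A0 + B0 C0 = 1` and `Ainf Ainf + Binf Cinf = 1`. The kernel is treated dually,
starting from bases of `ker (B0¹ X1¹)` and `ker X1²` and using `C0 B0 + D0 D0 = 1` and
`Cinf Binf + Dinf Dinf = 1`.
-/

section LinearAlgebra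

variable {K m n k : Type*} [Field K] [Fintype n]

theorem exists_mul_eq_one_of_mulVecLin_injective [Fintype m] [DecidableEq n]
    {M : Matrix m n K} (hM : Function.Injective M.mulVecLin) : ∃ N : Matrix n m K, N * M = 1 := by
  classical
  obtain ⟨g, hg⟩ := LinearMap.exists_leftInverse_of_injective _ (LinearMap.ker_eq_bot.2 hM)
  refine ⟨LinearMap.toMatrix' g, Matrix.toLin'.injective ?_⟩
  rwa [Matrix.toLin'_mul, Matrix.toLin'_toMatrix', Matrix.toLin'_one]

theorem exists_ker_matrix (M : Matrix m n K) :
    ∃ (P : Matrix n (Fin (finrank K (LinearMap.ker M.mulVecLin))) K)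
      (P' : Matrix (Fin (finrank K (LinearMap.ker M.mulVecLin))) n K),
      M * P = 0 ∧ P' * P = 1 := by
  classical
  let f := (LinearMap.ker M.mulVecLin).subtype ∘ₗ
    (Module.finBasis K (LinearMap.ker M.mulVecLin)).equivFun.symm.toLinearMap
  have hf : (LinearMap.toMatrix' f).mulVecLin = f := Matrix.toLin'_toMatrix' f
  have hf_inj : Function.Injective (LinearMap.toMatrix' f).mulVecLin := by
    rw [hf]
    exact Subtype.val_injective.comp (LinearEquiv.injective _)
  obtain ⟨P', hP'⟩ := exists_mul_eq_one_of_mulVecLin_injective hf_inj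
  refine ⟨LinearMap.toMatrix' f, P', Matrix.toLin'.injective ?_, hP'⟩
  rw [Matrix.toLin'_mul, Matrix.toLin'_toMatrix', map_zero]
  exact LinearMap.ext fun v => (Subtype.prop _ : _ ∈ LinearMap.ker M.mulVecLin)

theorem card_le_finrank_ker [Fintype k] [DecidableEq k] {M : Matrix m n K}
    {F : Matrix n k K} {L : Matrix k n K} (hMF : M * F = 0) (hLF : L * F = 1) :
    Fintype.card k ≤ finrank K (LinearMap.ker M.mulVecLin) := by
  have hF_mem (v : k → K) : F.mulVecLin v ∈ LinearMap.ker M.mulVecLin := by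
    simp [Matrix.mulVec_mulVec, hMF]
  have hF_inj : Function.Injective F.mulVecLin := Function.LeftInverse.injective
    (g := L.mulVec) fun v => by simp [Matrix.mulVec_mulVec, hLF]
  have hF := LinearMap.finrank_le_finrank_of_injective
    (f := F.mulVecLin.codRestrict _ hF_mem) fun _ _ h => hF_inj (congrArg Subtype.val h)
  rwa [Module.finrank_fintype_fun_eq_card] at hF

theorem finrank_coker_eq_finrank_ker_transpose [Fintype m] (M : Matrix m n K) :
    finrank K ((m → K) ⧸ LinearMap.range M.mulVecLin) =
      finrank K (LinearMap.ker Mᵀ.mulVecLin) := by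
  have hcoker := (LinearMap.range M.mulVecLin).finrank_quotient_add_finrank
  have hker := Mᵀ.mulVecLin.finrank_range_add_finrank_ker
  have hrank : finrank K (LinearMap.range Mᵀ.mulVecLin) =
    finrank K (LinearMap.range M.mulVecLin) := M.rank_transpose
  lia

theorem exists_coker_matrix [Fintype m] (M : Matrix m n K) :
    ∃ (P : Matrix (Fin (finrank K ((m → K) ⧸ LinearMap.range M.mulVecLin))) m K)
      (P' : Matrix m (Fin (finrank K ((m → K) ⧸ LinearMap.range M.mulVecLin))) K),
      P * M = 0 ∧ P * P' = 1 := by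
  classical
  rw [finrank_coker_eq_finrank_ker_transpose]
  obtain ⟨P, P', hP, hP'⟩ := exists_ker_matrix Mᵀ
  refine ⟨Pᵀ, P'ᵀ, ?_, ?_⟩
  · rw [← Matrix.transpose_eq_zero, Matrix.transpose_mul, Matrix.transpose_transpose, hP]
  · rw [← Matrix.transpose_mul, hP', Matrix.transpose_one]

theorem card_le_finrank_coker [Fintype m] [Fintype k] [DecidableEq k] {M : Matrix m n K}
    {E : Matrix k m K} {R : Matrix m k K} (hEM : E * M = 0) (hER : E * R = 1) :
    Fintype.card k ≤ finrank K ((m → K) ⧸ LinearMap.range M.mulVecLin) := by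
  rw [finrank_coker_eq_finrank_ker_transpose]
  apply card_le_finrank_ker (F := Eᵀ) (L := Rᵀ)
  · rw [← Matrix.transpose_mul, hEM, Matrix.transpose_zero]
  · rw [← Matrix.transpose_mul, hER, Matrix.transpose_one]

end LinearAlgebra

section MatrixAlgebra

theorem fromCols_add_fromCols {R m n p : Type*} [Add R] (A A' : Matrix m n R)
    (C C' : Matrix m p R) :
    fromCols A C + fromCols A' C' = fromCols (A + A') (C + C') := by
  ext i (j | j) <;> rfl

theorem fromCols_eq_zero_iff {R m n p : Type*} [Zero R] {A : Matrix m n R} {C : Matrix m p R} :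
    fromCols A C = 0 ↔ A = 0 ∧ C = 0 := by
  simp [← Matrix.ext_iff, forall_and]

theorem fromRows_eq_zero_iff {R m n p : Type*} [Zero R] {A : Matrix m p R} {C : Matrix n p R} :
    fromRows A C = 0 ↔ A = 0 ∧ C = 0 := by
  simp [← Matrix.ext_iff]

end MatrixAlgebra

namespace SplicingDatum

section Relations

variable (d : SplicingDatum) {m : Type*}

theorem A0_mul_B0 : d.A0 * d.B0 = d.B0 * d.D0 := by
  rw [← sub_eq_zero, ZModModule.sub_eq_add, d.comm0]

theorem Ainf_mul_Binf : d.Ainf * d.Binf = d.Binf * d.Dinf := by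
  rw [← sub_eq_zero, ZModModule.sub_eq_add, d.comminf]

theorem mul_A0_mul_B0 (M : Matrix m (Fin d.ainf) F2) :
    M * d.A0 * d.B0 = M * d.B0 * d.D0 := by
  rw [Matrix.mul_assoc, A0_mul_B0, ← Matrix.mul_assoc]

theorem mul_Ainf_mul_Binf (M : Matrix m (Fin d.a1) F2) :
    M * d.Ainf * d.Binf = M * d.Binf * d.Dinf := by
  rw [Matrix.mul_assoc, Ainf_mul_Binf, ← Matrix.mul_assoc]

theorem A0_mul_B0_mul (M : Matrix (Fin d.a1) m F2) :
    d.A0 * (d.B0 * M) = d.B0 * (d.D0 * M) := by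
  rw [← Matrix.mul_assoc, A0_mul_B0, Matrix.mul_assoc]

theorem Ainf_mul_Binf_mul (M : Matrix (Fin d.a0) m F2) :
    d.Ainf * (d.Binf * M) = d.Binf * (d.Dinf * M) := by
  rw [← Matrix.mul_assoc, Ainf_mul_Binf, Matrix.mul_assoc]

theorem A0_mul_A0_add_B0_mul_C0 : d.A0 * d.A0 + d.B0 * d.C0 = 1 := by
  have h := d.inv0_right
  rw [fromBlocks_multiply, ← fromBlocks_one, fromBlocks_inj] at h
  exact h.1

theorem Ainf_mul_Ainf_add_Binf_mul_Cinf : d.Ainf * d.Ainf + d.Binf * d.Cinf = 1 := by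
  have h := d.invinf_right
  rw [fromBlocks_multiply, ← fromBlocks_one, fromBlocks_inj] at h
  exact h.1

theorem C0_mul_B0_add_D0_mul_D0 : d.C0 * d.B0 + d.D0 * d.D0 = 1 := by
  have h := d.inv0_left
  rw [fromBlocks_multiply, ← fromBlocks_one, fromBlocks_inj] at h
  exact h.2.2.2

theorem Cinf_mul_Binf_add_Dinf_mul_Dinf : d.Cinf * d.Binf + d.Dinf * d.Dinf = 1 := by
  have h := d.invinf_left
  rw [fromBlocks_multiply, ← fromBlocks_one, fromBlocks_inj] at h
  exact h.2.2.2

end Relations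

variable {e1 e2 : SplicingDatum} {k l : Type*}

section Coker

variable {P : Matrix k (Fin e1.a1) F2} {Q : Matrix l (Fin e2.a1) F2}
  {P' : Matrix (Fin e1.a1) k F2} {Q' : Matrix (Fin e2.a1) l F2}
  {Z : Matrix (Fin e2.a1) (Fin e2.ainf) F2} {Y : Matrix (Fin e2.ainf) (Fin e2.a1) F2}

/-- Linear functionals on the target of `D`, one for each pair of a row of `P` and a row of `Q`.
They vanish on the range of `D` when the rows of `P` and `Q` are functionals on `coker (X1¹ Binf¹)`
and `coker X1²`. The parameter `Z` stands for a left inverse of `B0²`. -/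
def cokerFunctionals (P : Matrix k (Fin e1.a1) F2) (Q : Matrix l (Fin e2.a1) F2)
    (Z : Matrix (Fin e2.a1) (Fin e2.ainf) F2) : Matrix (k × l) (Tgt e1 e2) F2 :=
  fromCols ((P * e1.Binf) ⊗ₖ (Q * e2.Binf)) <|
  fromCols ((P * e1.Binf * e1.B1 * e1.A0) ⊗ₖ (Q * e2.Ainf)) <|
  fromCols ((P * e1.Binf * e1.B1 * e1.A0) ⊗ₖ (Q * e2.Binf)) <|
  fromCols ((P * e1.Ainf) ⊗ₖ (Q * e2.Binf * e2.B1 * e2.A0) +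
    (P * e1.Binf * e1.B1 * e1.B0) ⊗ₖ (Q * Z)) <|
  fromCols 0 0

theorem cokerFunctionals_mul_spliceD (hP : P * (e1.X1M * e1.Binf) = 0)
    (hQ : Q * e2.X1M = 0) (hZ : Z * e2.B0 = 1) :
    cokerFunctionals P Q Z * spliceD e1 e2 = 0 := by
  simp only [X1M, ← Matrix.mul_assoc] at hP hQ
  have hQZ : Q * Z * e2.B0 = Q := by rw [Matrix.mul_assoc, hZ, Matrix.mul_one]
  simp only [cokerFunctionals, spliceD, row1, row2, row3, row4, row5, row6, X1M,
    fromCols_mul_fromRows, mul_fromCols, fromCols_add_fromCols, fromCols_eq_zero_iff,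
    Matrix.mul_add, Matrix.add_mul, ← mul_kronecker_mul, ← Matrix.mul_assoc, Matrix.mul_one,
    hP, hQ, Matrix.mul_zero, Matrix.zero_mul, zero_kronecker, kronecker_zero, zero_add, add_zero]
  refine ⟨?ainf_ainf, ?ainf_a0, ?a1_a0, ?a0_ainf, ?a0_a1, ?a1_a1⟩
  case ainf_ainf =>
    rw [mul_Ainf_mul_Binf, mul_Ainf_mul_Binf, ← add_assoc, ZModModule.add_add_add_cancel,
      ZModModule.add_self]
  case ainf_a0 => rw [mul_Ainf_mul_Binf, ← add_assoc, ZModModule.add_self]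
  case a1_a0 =>
    rw [mul_A0_mul_B0 e2, hQ, hQZ, mul_Ainf_mul_Binf]
    simp only [Matrix.zero_mul, kronecker_zero, zero_add]
    rw [← add_assoc, ZModModule.add_add_add_cancel, ZModModule.add_self]
  case a0_ainf => rw [mul_Ainf_mul_Binf, ZModModule.add_self]
  case a0_a1 =>
    simp only [mul_A0_mul_B0, hQ, hQZ, Matrix.zero_mul, kronecker_zero, zero_add,
      ZModModule.add_self]
  case a1_a1 =>
    simp only [mul_A0_mul_B0, hQ, hQZ, Matrix.zero_mul, kronecker_zero, zero_add,
      ZModModule.add_self]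

/-- Vectors in the target of `D` dual to `cokerFunctionals P Q Z`, for `P'` and `Q'` right inverses
of `P` and `Q`. The parameter `Y` stands for a right inverse of `Binf² B1²`. -/
def cokerSection (P' : Matrix (Fin e1.a1) k F2) (Q' : Matrix (Fin e2.a1) l F2)
    (Z : Matrix (Fin e2.a1) (Fin e2.ainf) F2) (Y : Matrix (Fin e2.ainf) (Fin e2.a1) F2) :
    Matrix (Tgt e1 e2) (k × l) F2 :=
  fromRows ((e1.Cinf * P') ⊗ₖ (e2.B1 * Y * Q') +
    (e1.B1 * e1.B0 * e1.Ainf * P') ⊗ₖ (e2.B1 * Y * Z * e2.A0 * Y * Q')) <|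
  fromRows 0 <|
  fromRows 0 <|
  fromRows ((e1.Ainf * P') ⊗ₖ (e2.A0 * Y * Q')) <|
  fromRows 0 0

theorem cokerFunctionals_mul_cokerSection [DecidableEq k] [DecidableEq l]
    (hP : P * P' = 1) (hQ : Q * e2.X1M = 0) (hQ' : Q * Q' = 1)
    (hY : e2.Binf * e2.B1 * Y = 1) :
    cokerFunctionals P Q Z * cokerSection P' Q' Z Y = 1 := by
  simp only [X1M, ← Matrix.mul_assoc] at hQ
  have hQY : Q * e2.Binf * e2.B1 * Y = Q := by
    rw [Matrix.mul_assoc Q, Matrix.mul_assoc Q, hY, Matrix.mul_one]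
  have hQA : Q * e2.Binf * e2.B1 * e2.A0 * e2.A0 = Q * e2.Binf * e2.B1 := by
    have h := congrArg (Q * e2.Binf * e2.B1 * ·) e2.A0_mul_A0_add_B0_mul_C0
    simpa only [Matrix.mul_add, ← Matrix.mul_assoc, hQ, Matrix.zero_mul, add_zero,
      Matrix.mul_one] using h
  have hPA : P * e1.Ainf * e1.Ainf * P' + P * e1.Binf * e1.Cinf * P' = 1 := by
    have h := congrArg (P * · * P') e1.Ainf_mul_Ainf_add_Binf_mul_Cinf
    simpa only [Matrix.mul_add, Matrix.add_mul, ← Matrix.mul_assoc, Matrix.mul_one, hP] using h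
  simp only [cokerFunctionals, cokerSection, fromCols_mul_fromRows, Matrix.mul_add,
    Matrix.add_mul, ← mul_kronecker_mul, ← Matrix.mul_assoc, Matrix.mul_zero, add_zero, zero_add,
    hQY, hQA, hQ']
  rw [← one_kronecker_one, ← hPA, add_kronecker, add_add_add_comm, ZModModule.add_self,
    add_zero, add_comm]

end Coker

section Ker

variable {P : Matrix (Fin e1.a1) k F2} {Q : Matrix (Fin e2.a1) l F2}
  {P' : Matrix k (Fin e1.a1) F2} {Q' : Matrix l (Fin e2.a1) F2}
  {Z : Matrix (Fin e2.a0) (Fin e2.a1) F2} {Y : Matrix (Fin e2.a1) (Fin e2.a0) F2}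

/-- Vectors in the source of `D`, one for each pair of a column of `P` and a column of `Q`. They lie
in `ker D` when the columns of `P` and `Q` lie in `ker (B0¹ X1¹)` and `ker X1²`. The parameter `Z`
stands for a right inverse of `Binf²`. -/
def kernelVectors (P : Matrix (Fin e1.a1) k F2) (Q : Matrix (Fin e2.a1) l F2)
    (Z : Matrix (Fin e2.a0) (Fin e2.a1) F2) : Matrix (Src e1 e2) (k × l) F2 :=
  fromRows ((e1.B0 * P) ⊗ₖ (e2.B0 * Q)) <|
  fromRows ((e1.B0 * P) ⊗ₖ (e2.Dinf * (e2.B1 * (e2.B0 * Q)))) <|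
  fromRows ((e1.D0 * P) ⊗ₖ (e2.Dinf * (e2.B1 * (e2.B0 * Q))) +
    (e1.Binf * (e1.B1 * (e1.B0 * P))) ⊗ₖ (Z * Q)) <|
  fromRows 0 <|
  fromRows ((e1.Dinf * (e1.B1 * (e1.B0 * P))) ⊗ₖ (e2.D0 * Q))
    ((e1.Binf * (e1.B1 * (e1.B0 * P))) ⊗ₖ (e2.D0 * Q))

theorem spliceD_mul_kernelVectors (hP : e1.B0 * e1.X1M * P = 0)
    (hQ : e2.X1M * Q = 0) (hZ : e2.Binf * Z = 1) :
    spliceD e1 e2 * kernelVectors P Q Z = 0 := by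
  simp only [X1M, Matrix.mul_assoc] at hP hQ
  have hZQ : e2.Binf * (Z * Q) = Q := by rw [← Matrix.mul_assoc, hZ, Matrix.one_mul]
  have hQD : e2.Binf * (e2.Dinf * (e2.B1 * (e2.B0 * Q))) = 0 := by
    rw [← Ainf_mul_Binf_mul, hQ, Matrix.mul_zero]
  simp only [kernelVectors, spliceD, row1, row2, row3, row4, row5, row6, X1M,
    fromCols_mul_fromRows, fromRows_mul, fromRows_eq_zero_iff,
    Matrix.mul_add, Matrix.add_mul, ← mul_kronecker_mul, Matrix.mul_assoc, Matrix.one_mul,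
    hP, hQ, hQD, hZQ, A0_mul_B0_mul, Ainf_mul_Binf_mul,
    Matrix.mul_zero, Matrix.zero_mul, zero_kronecker, kronecker_zero, zero_add, add_zero]
  refine ⟨?a0_a0, ?ainf_a1, ?ainf_a0, ?a1_ainf, ?a0_ainf, ?a1_a1⟩
  case a0_a0 => rw [← add_assoc, ZModModule.add_add_add_cancel, ZModModule.add_self]
  case ainf_a1 => rw [ZModModule.add_self, add_zero, ZModModule.add_self]
  case ainf_a0 => rw [add_assoc, ZModModule.add_self, add_zero, ZModModule.add_self]
  case a1_ainf => rw [ZModModule.add_self, add_zero, ZModModule.add_self]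
  case a0_ainf => rw [ZModModule.add_self]
  case a1_a1 => rw [add_assoc, ← add_assoc, ← add_assoc, ZModModule.add_self]

/-- Linear functionals on the source of `D` dual to `kernelVectors P Q Z`, for `P'` and `Q'` left
inverses of `P` and `Q`. The parameter `Y` stands for a left inverse of `B1² B0²`. -/
def kernelRetraction (P' : Matrix k (Fin e1.a1) F2) (Q' : Matrix l (Fin e2.a1) F2)
    (Z : Matrix (Fin e2.a0) (Fin e2.a1) F2) (Y : Matrix (Fin e2.a1) (Fin e2.a0) F2) :
    Matrix (k × l) (Src e1 e2) F2 :=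
  fromCols ((P' * e1.C0) ⊗ₖ (Q' * (Y * e2.B1)) +
    (P' * (e1.D0 * (e1.Binf * e1.B1))) ⊗ₖ (Q' * (Y * (e2.Dinf * (Z * (Y * e2.B1)))))) <|
  fromCols 0 <|
  fromCols ((P' * e1.D0) ⊗ₖ (Q' * (Y * e2.Dinf))) <|
  fromCols 0 <|
  fromCols 0 0

theorem kernelRetraction_mul_kernelVectors [DecidableEq k] [DecidableEq l]
    (hP' : P' * P = 1) (hQ : e2.X1M * Q = 0) (hQ' : Q' * Q = 1)
    (hY : Y * (e2.B1 * e2.B0) = 1) :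
    kernelRetraction P' Q' Z Y * kernelVectors P Q Z = 1 := by
  simp only [X1M, Matrix.mul_assoc] at hQ
  have hYQ : Y * (e2.B1 * (e2.B0 * Q)) = Q := by
    rw [← Matrix.mul_assoc e2.B1, ← Matrix.mul_assoc Y, hY, Matrix.one_mul]
  have hDQ : e2.Dinf * (e2.Dinf * (e2.B1 * (e2.B0 * Q))) = e2.B1 * (e2.B0 * Q) := by
    have h := congrArg (· * (e2.B1 * (e2.B0 * Q))) e2.Cinf_mul_Binf_add_Dinf_mul_Dinf
    simpa only [Matrix.add_mul, Matrix.mul_assoc, hQ, Matrix.mul_zero, zero_add,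
      Matrix.one_mul] using h
  have hPD : P' * (e1.C0 * (e1.B0 * P)) + P' * (e1.D0 * (e1.D0 * P)) = 1 := by
    have h := congrArg (P' * · * P) e1.C0_mul_B0_add_D0_mul_D0
    simpa only [Matrix.mul_add, Matrix.add_mul, Matrix.mul_assoc, Matrix.one_mul, hP'] using h
  simp only [kernelRetraction, kernelVectors, fromCols_mul_fromRows, Matrix.mul_add,
    Matrix.add_mul, ← mul_kronecker_mul, Matrix.mul_assoc, Matrix.zero_mul, add_zero, zero_add,
    hYQ, hDQ, hQ']
  rw [← one_kronecker_one, ← hPD, add_kronecker, add_add_add_comm, ZModModule.add_self, add_zero]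

end Ker

theorem cdim_mul_cdim_le_cdim_spliceD (hB0 : Function.Injective e2.B0.mulVecLin)
    (hB : Function.Surjective (e2.Binf * e2.B1).mulVecLin) :
    cdim (e1.X1M * e1.Binf) * cdim e2.X1M ≤ cdim (spliceD e1 e2) := by
  obtain ⟨Z, hZ⟩ := exists_mul_eq_one_of_mulVecLin_injective hB0
  obtain ⟨Y, hY⟩ := Matrix.mulVec_surjective_iff_exists_right_inverse.1 hB
  obtain ⟨P, P', hP, hP'⟩ := exists_coker_matrix (e1.X1M * e1.Binf)
  obtain ⟨Q, Q', hQ, hQ'⟩ := exists_coker_matrix e2.X1M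
  have h := card_le_finrank_coker (cokerFunctionals_mul_spliceD hP hQ hZ)
    (cokerFunctionals_mul_cokerSection hP' hQ hQ' hY)
  rwa [Fintype.card_prod, Fintype.card_fin, Fintype.card_fin] at h

theorem kdim_mul_kdim_le_kdim_spliceD (hBinf : Function.Surjective e2.Binf.mulVecLin)
    (hB : Function.Injective (e2.B1 * e2.B0).mulVecLin) :
    kdim (e1.B0 * e1.X1M) * kdim e2.X1M ≤ kdim (spliceD e1 e2) := by
  obtain ⟨Z, hZ⟩ := Matrix.mulVec_surjective_iff_exists_right_inverse.1 hBinf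
  obtain ⟨Y, hY⟩ := exists_mul_eq_one_of_mulVecLin_injective hB
  obtain ⟨P, P', hP, hP'⟩ := exists_ker_matrix (e1.B0 * e1.X1M)
  obtain ⟨Q, Q', hQ, hQ'⟩ := exists_ker_matrix e2.X1M
  have h := card_le_finrank_ker (spliceD_mul_kernelVectors hP hQ hZ)
    (kernelRetraction_mul_kernelVectors hP' hQ hQ' hY)
  rwa [Fintype.card_prod, Fintype.card_fin, Fintype.card_fin] at h

end SplicingDatum

open SplicingDatum in
theorem stmt13_general (e1 e2 : SplicingDatum) :
    (Function.Injective e2.B0.mulVecLin → Function.Surjective (e2.Binf * e2.B1).mulVecLin →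
      cdim (spliceD e1 e2) ≥ cdim (e1.X1M * e1.Binf) * cdim e2.X1M) ∧
    (Function.Surjective e2.Binf.mulVecLin → Function.Injective (e2.B1 * e2.B0).mulVecLin →
      kdim (spliceD e1 e2) ≥ kdim (e1.B0 * e1.X1M) * kdim e2.X1M) :=
  ⟨cdim_mul_cdim_le_cdim_spliceD, kdim_mul_kdim_le_kdim_spliceD⟩

open SplicingDatum in
/-- lower bounds for `coker D` (and `ker D`) in the case
`r1² = a1²`, `a0² = a1² + 1 `, `a1² < ainf²`. -/
theorem stmt13 (e1 e2 : SplicingDatum)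
    (hB0 : Function.Injective e2.B0.mulVecLin)
    (hBinf : Function.Surjective e2.Binf.mulVecLin)
    (hr1 : e2.B1.rank = e2.a1)
    (ha0 : e2.a0 = e2.a1 + 1)
    (ha1 : e2.a1 < e2.ainf)
    (hsurj : Function.Surjective (e2.Binf * e2.B1).mulVecLin) :
    cdim (spliceD e1 e2) ≥ cdim (e1.X1M * e1.Binf) * cdim e2.X1M ∧
    (Function.Injective (e2.B1 * e2.B0).mulVecLin →
      kdim (spliceD e1 e2) ≥ kdim (e1.B0 * e1.X1M) * kdim e2.X1M) :=
  ⟨(stmt13_general e1 e2).1 hB0 hsurj, (stmt13_general e1 e2).2 hBinf⟩
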